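/- arXiv:2012.01882 — 5 statements merged into one kernel-verified Lean document; each statement's English description precedes it below -/
import Mathlib

section
/- Let n ≥ 1, let ε > 0, and let P be a probability vector on [n] whose ℓ₁ distance from the uniform vector is at least ε, i.e. ∑_{i} |P i − 1/n| ≥ ε. Then the collision probability of P satisfies μ(P) = ∑_{i} (P i)² ≥ (1 + ε²)/n. -/
/-- If a probability vector `P` on `[n]` is ε-far in ℓ₁ from the uniform vector, then its
collision probability `μ(P) = ∑ i, (P i)²` is at least `(1 + ε²)/n`. -/
theorem collision_prob_lower_bound_of_far (n : ℕ) (hn : 1 ≤ n) (ε : ℝ) (hε : 0 < ε)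
    (P : Fin n → ℝ) (hP0 : ∀ i, 0 ≤ P i) (hP1 : (∑ i, P i) = 1)
    (hfar : ε ≤ ∑ i, |P i - 1 / (n : ℝ)|) :
    (1 + ε ^ 2) / (n : ℝ) ≤ ∑ i, (P i) ^ 2 := by
  have hn0 : (0 : ℝ) < n := by exact_mod_cast hn
  have cauchy_schwarz : (∑ i, |P i - 1 / (n : ℝ)|) ^ 2 ≤ n * ∑ i, (P i - 1 / (n : ℝ)) ^ 2 := by
    simpa using sq_sum_le_card_mul_sum_sq (s := Finset.univ) (f := fun i => |P i - 1 / (n : ℝ)|)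
  have variance_eq : ∑ i, (P i - 1 / (n : ℝ)) ^ 2 = ∑ i, (P i) ^ 2 - 1 / n := by
    simp only [sub_sq, Finset.sum_add_distrib, Finset.sum_sub_distrib, ← Finset.sum_mul,
      ← Finset.mul_sum, hP1, Finset.sum_const, Finset.card_univ, Fintype.card_fin, nsmul_eq_mul]
    field_simp
    ring
  have hsq : ε ^ 2 ≤ (∑ i, |P i - 1 / (n : ℝ)|) ^ 2 := pow_le_pow_left₀ hε.le hfar 2
  rw [variance_eq, mul_sub, mul_one_div_cancel hn0.ne'] at cauchy_schwarz
  rw [div_le_iff₀' hn0]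
  linarith
end

section
/- Let n ≥ 1 and let P be a probability vector on [n]. Define a : Fin n → ℝ by a i = P i − 1/n. Then γ(P) − μ(P)² = (1/n)·∑_i (a i)² + ∑_i (a i)³ − (∑_i (a i)²)², and consequently γ(P) − μ(P)² ≤ (1/n)·∑_i (a i)² + (∑_i (a i)²)^{3/2}. -/
/-- The sum of cubes is at most the `3/2` power of the sum of squares. -/
theorem sum_cube_le_sum_sq_rpow {ι : Type*} (s : Finset ι) (a : ι → ℝ) :
    ∑ i ∈ s, a i ^ 3 ≤ (∑ i ∈ s, a i ^ 2) ^ ((3 : ℝ) / 2) := by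
  set S := ∑ i ∈ s, a i ^ 2
  have hS0 : 0 ≤ S := Finset.sum_nonneg fun i _ => sq_nonneg (a i)
  have hpow : S ^ ((3 : ℝ) / 2) = √S * S := by
    rw [show (3 : ℝ) / 2 = 1 / 2 + 1 by norm_num,
      Real.rpow_add_of_nonneg hS0 (by norm_num) (by norm_num), Real.rpow_one,
      Real.sqrt_eq_rpow]
  rw [hpow]
  calc ∑ i ∈ s, a i ^ 3 ≤ ∑ i ∈ s, √S * a i ^ 2 := by
        refine Finset.sum_le_sum fun i hi => ?_
        have h : a i ≤ √S := Real.le_sqrt_of_sq_le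
          (Finset.single_le_sum (f := fun j => a j ^ 2) (fun j _ => sq_nonneg (a j)) hi)
        rw [pow_succ']
        exact mul_le_mul_of_nonneg_right h (sq_nonneg (a i))
    _ = √S * S := by rw [← Finset.mul_sum]

/-- With `a i = P i − 1/n`, one has
`γ(P) − μ(P)² = (1/n)·∑ aᵢ² + ∑ aᵢ³ − (∑ aᵢ²)²`, and consequently
`γ(P) − μ(P)² ≤ (1/n)·∑ aᵢ² + (∑ aᵢ²)^{3/2}`. -/
theorem gamma_sub_mu_sq_eq_and_le (n : ℕ) (hn : 1 ≤ n)
    (P : Fin n → ℝ) (hP0 : ∀ i, 0 ≤ P i) (hP1 : (∑ i, P i) = 1)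
    (a : Fin n → ℝ) (ha : ∀ i, a i = P i - 1 / (n : ℝ)) :
    ((∑ i, (P i) ^ 3) - (∑ i, (P i) ^ 2) ^ 2
        = (1 / (n : ℝ)) * (∑ i, (a i) ^ 2) + (∑ i, (a i) ^ 3) - (∑ i, (a i) ^ 2) ^ 2) ∧
    ((∑ i, (P i) ^ 3) - (∑ i, (P i) ^ 2) ^ 2
        ≤ (1 / (n : ℝ)) * (∑ i, (a i) ^ 2) + (∑ i, (a i) ^ 2) ^ ((3 : ℝ) / 2)) := by
  have hn0 : (n : ℝ) ≠ 0 := by positivity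
  have hP : ∀ i, P i = a i + 1 / (n : ℝ) := fun i => by rw [ha]; ring
  have hsum : ∑ i, a i = 0 := by
    simp [ha, Finset.sum_sub_distrib, hP1, hn0]
  have hsq : ∑ i, P i ^ 2 = ∑ i, a i ^ 2 + 1 / (n : ℝ) := by
    have h : ∀ i, P i ^ 2 = a i ^ 2 + 2 / (n : ℝ) * a i + 1 / (n : ℝ) ^ 2 := fun i => by
      rw [hP]; ring
    simp only [h, Finset.sum_add_distrib, ← Finset.mul_sum, hsum, Finset.sum_const,
      Finset.card_univ, Fintype.card_fin, nsmul_eq_mul]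
    field_simp
    ring
  have hcube : ∑ i, P i ^ 3
      = ∑ i, a i ^ 3 + 3 / (n : ℝ) * ∑ i, a i ^ 2 + 1 / (n : ℝ) ^ 2 := by
    have h : ∀ i, P i ^ 3 = a i ^ 3 + 3 / (n : ℝ) * a i ^ 2 + 3 / (n : ℝ) ^ 2 * a i
        + 1 / (n : ℝ) ^ 3 := fun i => by
      rw [hP]; ring
    simp only [h, Finset.sum_add_distrib, ← Finset.mul_sum, hsum, Finset.sum_const,
      Finset.card_univ, Fintype.card_fin, nsmul_eq_mul]
    field_simp
    ring
  have heq : (∑ i, (P i) ^ 3) - (∑ i, (P i) ^ 2) ^ 2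
      = (1 / (n : ℝ)) * (∑ i, (a i) ^ 2) + (∑ i, (a i) ^ 3) - (∑ i, (a i) ^ 2) ^ 2 := by
    rw [hsq, hcube]
    ring
  refine ⟨heq, ?_⟩
  rw [heq]
  linarith [sum_cube_le_sum_sq_rpow Finset.univ a, sq_nonneg (∑ i, a i ^ 2)]
end

section
/- Let G = (V, E) be a finite simple graph and P a probability vector on [n]. For the collision count Z on the product sample space, the variance satisfies Var[Z] = |E| · (μ(P) − μ(P)²) + c(G) · (γ(P) − μ(P)²), where μ(P) = ∑_i (P i)², γ(P) = ∑_i (P i)³, and c(G) is the number of ordered 2-paths of G. -/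
open Finset

open Classical in
/-- Probability of the event `A` under the product distribution on `Ω = V → Fin n`,
where the coordinates are independent and each has law the probability vector `P`. -/
noncomputable def pr {V : Type*} [Fintype V] [DecidableEq V] {n : ℕ}
    (P : Fin n → ℝ) (A : (V → Fin n) → Prop) : ℝ :=
  ∑ ω : V → Fin n, if A ω then ∏ v, P (ω v) else 0

/-- Expectation of `f` under the product distribution. -/
noncomputable def ex {V : Type*} [Fintype V] [DecidableEq V] {n : ℕ}
    (P : Fin n → ℝ) (f : (V → Fin n) → ℝ) : ℝ :=
  ∑ ω : V → Fin n, (∏ v, P (ω v)) * f ω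

/-- Variance of `f` under the product distribution. -/
noncomputable def var {V : Type*} [Fintype V] [DecidableEq V] {n : ℕ}
    (P : Fin n → ℝ) (f : (V → Fin n) → ℝ) : ℝ :=
  ex P (fun ω => (f ω - ex P f) ^ 2)

/-- The collision count `Z(ω) = ∑_{{u,v} ∈ E} 1[ω u = ω v]`. -/
noncomputable def collisions {V : Type*} [Fintype V] [DecidableEq V] {n : ℕ}
    (G : SimpleGraph V) [DecidableRel G.Adj] (ω : V → Fin n) : ℝ :=
  ∑ e ∈ G.edgeFinset,
    Sym2.lift ⟨fun u v => if ω u = ω v then (1 : ℝ) else 0,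
      fun u v => by by_cases h : ω u = ω v <;> simp [h, eq_comm]⟩ e

/-- The number of edges `|E|` of the comparison graph. -/
def edgeCount {V : Type*} [Fintype V] [DecidableEq V]
    (G : SimpleGraph V) [DecidableRel G.Adj] : ℕ :=
  G.edgeFinset.card

/-- The number of ordered 2-paths `c(G) = ∑_v d(v)·(d(v) − 1)`. -/
def twoPaths {V : Type*} [Fintype V]
    (G : SimpleGraph V) [DecidableRel G.Adj] : ℕ :=
  ∑ v, G.degree v * (G.degree v - 1)

section Expectation

variable {V : Type*} [Fintype V] [DecidableEq V] {n : ℕ} {P : Fin n → ℝ}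

lemma ex_const_mul (c : ℝ) (f : (V → Fin n) → ℝ) :
    ex P (fun ω => c * f ω) = c * ex P f := by
  simp only [ex, Finset.mul_sum]
  exact Finset.sum_congr rfl fun ω _ => by ring

lemma ex_sum {ι : Type*} (s : Finset ι) (f : ι → (V → Fin n) → ℝ) :
    ex P (fun ω => ∑ i ∈ s, f i ω) = ∑ i ∈ s, ex P (f i) := by
  simp only [ex, Finset.mul_sum]
  exact Finset.sum_comm

lemma ex_const (hP1 : ∑ i, P i = 1) (c : ℝ) : ex P (fun _ : V → Fin n => c) = c := by
  have h : ∑ ω : V → Fin n, ∏ v, P (ω v) = 1 := by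
    rw [← Fintype.prod_sum (fun _ : V => P)]
    simp [hP1]
  simp only [ex, ← Finset.sum_mul, h, one_mul]

lemma var_eq_ex_sq_sub_sq (hP1 : ∑ i, P i = 1) (f : (V → Fin n) → ℝ) :
    var P f = ex P (fun ω => f ω ^ 2) - ex P f ^ 2 := by
  have key : ∀ c : ℝ, ex P (fun ω => (f ω - c) ^ 2)
      = ex P (fun ω => f ω ^ 2) - 2 * c * ex P f + ex P (fun _ : V → Fin n => c ^ 2) := by
    intro c
    simp only [ex, Finset.mul_sum, ← Finset.sum_sub_distrib, ← Finset.sum_add_distrib]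
    exact Finset.sum_congr rfl fun ω _ => by ring
  rw [var, key, ex_const hP1]
  ring

lemma prod_update_mul (v : V) (ω : V → Fin n) (i : Fin n) :
    (∏ w, P (Function.update ω v i w)) * P (ω v) = (∏ w, P (ω w)) * P i := by
  rw [Fintype.prod_eq_mul_prod_compl v, Fintype.prod_eq_mul_prod_compl v (fun w => P (ω w))]
  have h : ∏ w ∈ {v}ᶜ, P (Function.update ω v i w) = ∏ w ∈ {v}ᶜ, P (ω w) :=
    Finset.prod_congr rfl fun w hw => by
      rw [Function.update_of_ne (by simpa using hw)]
  rw [h, Function.update_self]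
  ring

/-- Resampling one coordinate does not change the expectation. -/
lemma ex_resample (hP1 : ∑ i, P i = 1) (v : V) (f : (V → Fin n) → ℝ) :
    ex P f = ex P (fun ω => ∑ i, P i * f (Function.update ω v i)) := by
  let swap : (V → Fin n) × Fin n → (V → Fin n) × Fin n :=
    fun p => (Function.update p.1 v p.2, p.1 v)
  have hswap : Function.Involutive swap := fun p => by simp [swap]
  calc ex P f = ∑ p : (V → Fin n) × Fin n, (∏ w, P (p.1 w)) * P p.2 * f p.1 := by
        rw [Fintype.sum_prod_type]
        refine Finset.sum_congr rfl fun ω _ => ?_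
        simp only [← Finset.sum_mul, ← Finset.mul_sum, hP1, mul_one]
    _ = ∑ p : (V → Fin n) × Fin n,
          (∏ w, P (p.1 w)) * P p.2 * f (Function.update p.1 v p.2) := by
        refine (Equiv.sum_comp hswap.toPerm _).symm.trans (Finset.sum_congr rfl fun p _ => ?_)
        change (∏ w, P (Function.update p.1 v p.2 w)) * P (p.1 v) * _ = _
        rw [prod_update_mul]
        rfl
    _ = ex P (fun ω => ∑ i, P i * f (Function.update ω v i)) := by
        rw [Fintype.sum_prod_type]
        refine Finset.sum_congr rfl fun ω _ => ?_
        rw [Finset.mul_sum]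
        exact Finset.sum_congr rfl fun i _ => by ring

lemma ex_comp_eval (hP1 : ∑ i, P i = 1) (v : V) (g : Fin n → ℝ) :
    ex P (fun ω => g (ω v)) = ∑ i, P i * g i := by
  rw [ex_resample hP1 v]
  simp only [Function.update_self]
  exact ex_const hP1 _

/-- A factor `1[ω a = ω b]` integrates to `P (ω a)` when nothing else depends on `ω b`. -/
lemma ex_ite_mul (hP1 : ∑ i, P i = 1) {a b : V} (hab : a ≠ b) (f : (V → Fin n) → ℝ)
    (hf : ∀ ω i, f (Function.update ω b i) = f ω) :
    ex P (fun ω => (if ω a = ω b then 1 else 0) * f ω) = ex P (fun ω => P (ω a) * f ω) := by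
  rw [ex_resample hP1 b]
  simp [hf, Function.update_of_ne hab]

lemma ex_mul_of_ne (hP1 : ∑ i, P i = 1) {a b : V} (hab : a ≠ b) (f g : Fin n → ℝ) :
    ex P (fun ω => f (ω a) * g (ω b)) = (∑ i, P i * f i) * ∑ i, P i * g i := by
  rw [ex_resample hP1 b, ← ex_comp_eval hP1 a f, mul_comm, ← ex_const_mul]
  simp only [Function.update_self, Function.update_of_ne hab, Finset.sum_mul]
  congr! 3
  ring

end Expectation

section Collisions

variable {V : Type*} [Fintype V] [DecidableEq V] {n : ℕ} {P : Fin n → ℝ}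

/-- The indicator that the two endpoints of an unordered pair collide. -/
noncomputable def edgeCollision {V : Type*} {n : ℕ} (e : Sym2 V) (ω : V → Fin n) : ℝ :=
  Sym2.lift ⟨fun u v => if ω u = ω v then (1 : ℝ) else 0,
    fun u v => by by_cases h : ω u = ω v <;> simp [h, eq_comm]⟩ e

lemma edgeCollision_mk {V : Type*} {n : ℕ} (a b : V) (ω : V → Fin n) :
    edgeCollision s(a, b) ω = if ω a = ω b then 1 else 0 := rfl

lemma ex_edgeCollision (hP1 : ∑ i, P i = 1) {e : Sym2 V} (he : ¬ e.IsDiag) :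
    ex P (edgeCollision e) = ∑ i, P i ^ 2 := by
  induction e with | _ a b
  have hab : a ≠ b := by simpa using he
  have h := ex_ite_mul hP1 hab (fun _ => 1) (fun _ _ => rfl)
  simp only [mul_one] at h
  refine h.trans ?_
  rw [ex_comp_eval hP1 a P]
  simp only [sq]

lemma ex_edgeCollision_mul_of_common (hP1 : ∑ i, P i = 1) {a b c : V} (hab : a ≠ b)
    (hac : a ≠ c) (hbc : b ≠ c) :
    ex P (fun ω => edgeCollision s(a, b) ω * edgeCollision s(a, c) ω) = ∑ i, P i ^ 3 := by
  simp only [edgeCollision_mk]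
  rw [ex_ite_mul hP1 hab _ (by simp [hab, hbc.symm])]
  simp only [mul_comm (P _)]
  rw [ex_ite_mul hP1 hac _ (by simp [hac]), ex_comp_eval hP1 a (fun i => P i * P i)]
  exact Finset.sum_congr rfl fun i _ => by ring

lemma ex_edgeCollision_mul_of_disjoint (hP1 : ∑ i, P i = 1) {a b c d : V} (hab : a ≠ b)
    (hcd : c ≠ d) (hac : a ≠ c) (had : a ≠ d) (hbc : b ≠ c) (hbd : b ≠ d) :
    ex P (fun ω => edgeCollision s(a, b) ω * edgeCollision s(c, d) ω) = (∑ i, P i ^ 2) ^ 2 := by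
  simp only [edgeCollision_mk]
  rw [ex_ite_mul hP1 hab _ (by simp [hbc.symm, hbd.symm])]
  simp only [mul_comm (P _)]
  rw [ex_ite_mul hP1 hcd _ (by simp [had]), ex_mul_of_ne hP1 hac.symm]
  simp only [sq]

lemma ex_edgeCollision_mul (hP1 : ∑ i, P i = 1) {e f : Sym2 V} (he : ¬ e.IsDiag)
    (hf : ¬ f.IsDiag) :
    ex P (fun ω => edgeCollision e ω * edgeCollision f ω)
      = (∑ i, P i ^ 2) ^ 2
        + (∑ v, (if v ∈ e then 1 else 0) * (if v ∈ f then 1 else 0))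
          * (∑ i, P i ^ 3 - (∑ i, P i ^ 2) ^ 2)
        + (if e = f then 1 else 0)
          * ((∑ i, P i ^ 2 - (∑ i, P i ^ 2) ^ 2)
            - 2 * (∑ i, P i ^ 3 - (∑ i, P i ^ 2) ^ 2)) := by
  have hself : ex P (fun ω => edgeCollision e ω * edgeCollision e ω) = ∑ i, P i ^ 2 := by
    rw [← ex_edgeCollision hP1 he]
    congr 1
    funext ω
    induction e with | _ a b
    simp [edgeCollision_mk]
  induction e with | _ a b
  induction f with | _ c d
  have hab : a ≠ b := by simpa using he
  have hcd : c ≠ d := by simpa using hf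
  have hcommon : ∑ v, (if v ∈ s(a, b) then (1 : ℝ) else 0) * (if v ∈ s(c, d) then 1 else 0)
      = (if a = c ∨ a = d then 1 else 0) + (if b = c ∨ b = d then 1 else 0) := by
    have h : ∀ v, (if v ∈ s(a, b) then (1 : ℝ) else 0)
        = (if v = a then 1 else 0) + (if v = b then 1 else 0) := by
      intro v
      by_cases hva : v = a
      · subst hva; simp [hab]
      · simp [hva]
    simp only [h, add_mul, Finset.sum_add_distrib]
    simp only [ite_mul, one_mul, zero_mul, Finset.sum_ite_eq', Finset.mem_univ, if_true,
      Sym2.mem_iff]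
  rw [hcommon]
  by_cases heq : s(a, b) = s(c, d)
  · rw [← heq, hself]
    have h : (a = c ∨ a = d) ∧ (b = c ∨ b = d) := by
      rw [Sym2.eq_iff] at heq; tauto
    simp only [h.1, h.2, if_true]
    ring
  · have hne := heq
    rw [Sym2.eq_iff] at hne
    rw [if_neg heq]
    by_cases hac : a = c
    · subst hac
      have hbd : b ≠ d := by tauto
      rw [ex_edgeCollision_mul_of_common hP1 hab hcd hbd]
      simp [hab.symm, hbd]
    by_cases had : a = d
    · subst had
      have hbc : b ≠ c := by tauto
      rw [Sym2.eq_swap (a := c), ex_edgeCollision_mul_of_common hP1 hab hcd.symm hbc]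
      simp [hab.symm, hbc]
    by_cases hbc : b = c
    · subst hbc
      rw [Sym2.eq_swap (a := a), ex_edgeCollision_mul_of_common hP1 hab.symm hcd had]
      simp [hab, had]
    by_cases hbd : b = d
    · subst hbd
      rw [Sym2.eq_swap (a := a), Sym2.eq_swap (a := c),
        ex_edgeCollision_mul_of_common hP1 hab.symm hcd.symm hac]
      simp [hab, hac]
    rw [ex_edgeCollision_mul_of_disjoint hP1 hab hcd hac had hbc hbd]
    simp [hac, had, hbc, hbd]

end Collisions

section Counting

variable {V : Type*} [Fintype V] [DecidableEq V] (G : SimpleGraph V) [DecidableRel G.Adj]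

lemma sum_edgeFinset_sum_common :
    ∑ e ∈ G.edgeFinset, ∑ f ∈ G.edgeFinset,
        ∑ v, (if v ∈ e then (1 : ℝ) else 0) * (if v ∈ f then 1 else 0)
      = ∑ v, (G.degree v : ℝ) ^ 2 := by
  have hdeg : ∀ v, ∑ e ∈ G.edgeFinset, (if v ∈ e then (1 : ℝ) else 0) = G.degree v := by
    intro v
    rw [Finset.sum_boole, ← G.card_incidenceFinset_eq_degree, G.incidenceFinset_eq_filter]
  simp only [← hdeg, sq, Finset.sum_mul_sum]
  rw [Finset.sum_comm (s := Finset.univ)]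
  refine Finset.sum_congr rfl fun e _ => ?_
  exact Finset.sum_comm

lemma twoPaths_add_two_mul_edgeCount :
    (twoPaths G : ℝ) + 2 * edgeCount G = ∑ v, (G.degree v : ℝ) ^ 2 := by
  have h : twoPaths G + 2 * edgeCount G = ∑ v, G.degree v ^ 2 := by
    rw [edgeCount, ← G.sum_degrees_eq_twice_card_edges, twoPaths, ← Finset.sum_add_distrib]
    refine Finset.sum_congr rfl fun v _ => ?_
    cases G.degree v with
    | zero => rfl
    | succ k => simp only [Nat.add_sub_cancel]; ring
  exact_mod_cast h

end Counting

/-- The variance of the collision count `Z` equals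
`|E|·(μ(P) − μ(P)²) + c(G)·(γ(P) − μ(P)²)`. -/
theorem variance_collisions {V : Type*} [Fintype V] [DecidableEq V] (n : ℕ)
    (G : SimpleGraph V) [DecidableRel G.Adj]
    (P : Fin n → ℝ) (hP0 : ∀ i, 0 ≤ P i) (hP1 : (∑ i, P i) = 1) :
    var P (fun ω : V → Fin n => collisions G ω)
      = (edgeCount G : ℝ) * ((∑ i, (P i) ^ 2) - (∑ i, (P i) ^ 2) ^ 2)
        + (twoPaths G : ℝ) * ((∑ i, (P i) ^ 3) - (∑ i, (P i) ^ 2) ^ 2) := by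
  have hdiag : ∀ e ∈ G.edgeFinset, ¬ e.IsDiag := fun e he =>
    G.not_isDiag_of_mem_edgeFinset he
  have hZ : ∀ ω : V → Fin n, collisions G ω = ∑ e ∈ G.edgeFinset, edgeCollision e ω :=
    fun _ => rfl
  have hmean : ex P (fun ω : V → Fin n => collisions G ω)
      = edgeCount G * ∑ i, P i ^ 2 := by
    simp only [hZ]
    rw [ex_sum, Finset.sum_congr rfl fun e he => ex_edgeCollision hP1 (hdiag e he)]
    simp [edgeCount]
  have hsq : ex P (fun ω : V → Fin n => collisions G ω ^ 2)
      = edgeCount G ^ 2 * (∑ i, P i ^ 2) ^ 2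
        + (∑ v, (G.degree v : ℝ) ^ 2) * (∑ i, P i ^ 3 - (∑ i, P i ^ 2) ^ 2)
        + edgeCount G * ((∑ i, P i ^ 2 - (∑ i, P i ^ 2) ^ 2)
            - 2 * (∑ i, P i ^ 3 - (∑ i, P i ^ 2) ^ 2)) := by
    have hZsq : ∀ ω : V → Fin n, collisions G ω ^ 2
        = ∑ e ∈ G.edgeFinset, ∑ f ∈ G.edgeFinset, edgeCollision e ω * edgeCollision f ω :=
      fun ω => by rw [hZ, sq, Finset.sum_mul_sum]
    have hones : ∑ e ∈ G.edgeFinset, ∑ f ∈ G.edgeFinset, (if e = f then (1 : ℝ) else 0)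
        = edgeCount G := by
      rw [Finset.sum_congr rfl fun e he => (Finset.sum_ite_eq _ e _).trans (if_pos he)]
      simp [edgeCount]
    simp only [hZsq, ex_sum]
    rw [Finset.sum_congr rfl fun e he => Finset.sum_congr rfl fun f hf =>
      ex_edgeCollision_mul hP1 (hdiag e he) (hdiag f hf)]
    simp only [Finset.sum_add_distrib, ← Finset.sum_mul]
    rw [sum_edgeFinset_sum_common, hones]
    simp only [Finset.sum_const, nsmul_eq_mul, edgeCount]
    ring
  rw [var_eq_ex_sq_sub_sq hP1, hmean, hsq, ← twoPaths_add_two_mul_edgeCount]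
  ring
end

section
/- Let n ≥ 2, ε ∈ (0,1], τ ∈ (0,1], and let G = (V,E) be a finite simple graph with |E| ≥ 4(n−1)/(τ²ε⁴). Let P be the uniform probability vector on [n] (P i = 1/n for all i), and let T = |E|·(1+τε²)/n. Then the probability that the collision count Z satisfies Z ≥ T is at most 1/4. -/
open Finset

/-- The indicator that the two endpoints of `e` receive the same value under `ω`. -/
noncomputable def collisionIndicator {V : Type*} {n : ℕ} (e : Sym2 V) (ω : V → Fin n) : ℝ :=
  Sym2.lift ⟨fun u v => if ω u = ω v then (1 : ℝ) else 0,
    fun u v => by by_cases h : ω u = ω v <;> simp [h, eq_comm]⟩ e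

lemma collisionIndicator_mk {V : Type*} {n : ℕ} (u v : V) (ω : V → Fin n) :
    collisionIndicator s(u, v) ω = if ω u = ω v then 1 else 0 := rfl

lemma collisionIndicator_update {V : Type*} [DecidableEq V] {n : ℕ} {e : Sym2 V} {u : V}
    (hu : u ∉ e) (ω : V → Fin n) (c : Fin n) :
    collisionIndicator e (Function.update ω u c) = collisionIndicator e ω := by
  induction e with
  | _ a b =>
    have ha : a ≠ u := fun h => hu (by simp [h])
    have hb : b ≠ u := fun h => hu (by simp [h])
    simp [collisionIndicator_mk, ha, hb]

/-- Averaging over the coordinate `u` annihilates the centered indicator of an edge at `u` times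
any function that does not depend on that coordinate. -/
lemma sum_centered_mul_eq_zero {V : Type*} [Fintype V] [DecidableEq V] {n : ℕ} (hn : n ≠ 0)
    {u v : V} (huv : u ≠ v) (g : (V → Fin n) → ℝ)
    (hg : ∀ ω c, g (Function.update ω u c) = g ω) :
    ∑ ω : V → Fin n, (collisionIndicator s(u, v) ω - 1 / n) * g ω = 0 := by
  have : NeZero n := ⟨hn⟩
  rw [← Equiv.sum_comp (Equiv.funSplitAt u (Fin n)).symm, Fintype.sum_prod_type_right]
  refine Finset.sum_eq_zero fun x _ => ?_
  have hupd (c : Fin n) : (Equiv.funSplitAt u (Fin n)).symm (c, x) =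
      Function.update ((Equiv.funSplitAt u (Fin n)).symm (0, x)) u c := by
    ext w
    by_cases h : w = u
    · subst h; simp
    · simp [h]
  have hgc (c : Fin n) : g ((Equiv.funSplitAt u (Fin n)).symm (c, x)) =
      g ((Equiv.funSplitAt u (Fin n)).symm (0, x)) := by
    rw [hupd c, hg]
  have hn' : (n : ℝ) ≠ 0 := by exact_mod_cast hn
  simp only [hgc, ← Finset.sum_mul]
  simp [collisionIndicator_mk, huv.symm, hn']

lemma sum_centered_mul_centered_eq_zero {V : Type*} [Fintype V] [DecidableEq V] {n : ℕ}
    (hn : n ≠ 0) {e f : Sym2 V} (he : ¬ e.IsDiag) (hef : e ≠ f) :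
    ∑ ω : V → Fin n,
      (collisionIndicator e ω - 1 / n) * (collisionIndicator f ω - 1 / n) = 0 := by
  have key : ∃ u ∈ e, u ∉ f := by
    by_contra! h
    induction e with
    | _ a b =>
      have hab : a ≠ b := by simpa using he
      exact hef ((Sym2.mem_and_mem_iff hab).1 ⟨h a (by simp), h b (by simp)⟩).symm
  obtain ⟨u, hue, huf⟩ := key
  obtain ⟨v, rfl⟩ := Sym2.mem_iff_exists.1 hue
  exact sum_centered_mul_eq_zero hn (by simpa using he) _ fun ω c => by
    rw [collisionIndicator_update huf]

lemma sum_centered_sq {V : Type*} [Fintype V] [DecidableEq V] {n : ℕ} (hn : n ≠ 0)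
    {e : Sym2 V} (he : ¬ e.IsDiag) :
    ∑ ω : V → Fin n, (collisionIndicator e ω - 1 / n) * (collisionIndicator e ω - 1 / n) =
      (n : ℝ) ^ Fintype.card V * (((n : ℝ) - 1) / n ^ 2) := by
  induction e with
  | _ u v =>
    have hn' : (n : ℝ) ≠ 0 := by exact_mod_cast hn
    have h0 := sum_centered_mul_eq_zero hn (u := u) (v := v) (by simpa using he)
      (fun _ => 1 - 2 / n) fun _ _ => rfl
    have hexp (ω : V → Fin n) :
        (collisionIndicator s(u, v) ω - 1 / n) * (collisionIndicator s(u, v) ω - 1 / n) =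
          (collisionIndicator s(u, v) ω - 1 / n) * (1 - 2 / n) + ((n : ℝ) - 1) / n ^ 2 := by
      rw [collisionIndicator_mk]
      split_ifs <;> field_simp <;> ring
    simp_rw [hexp, Finset.sum_add_distrib, h0]
    simp

/-- Second central moment of the collision count, summed over all assignments. -/
lemma sum_collisions_sub_sq {V : Type*} [Fintype V] [DecidableEq V] {n : ℕ} (hn : n ≠ 0)
    (G : SimpleGraph V) [DecidableRel G.Adj] :
    ∑ ω : V → Fin n, (collisions G ω - edgeCount G / n) ^ 2 =
      (n : ℝ) ^ Fintype.card V * (edgeCount G * (((n : ℝ) - 1) / n ^ 2)) := by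
  have hdiag {e : Sym2 V} (he : e ∈ G.edgeFinset) : ¬ e.IsDiag :=
    G.not_isDiag_of_mem_edgeSet (SimpleGraph.mem_edgeFinset.1 he)
  have hcent (ω : V → Fin n) : collisions G ω - edgeCount G / n =
      ∑ e ∈ G.edgeFinset, (collisionIndicator e ω - 1 / n) := by
    rw [Finset.sum_sub_distrib, Finset.sum_const, nsmul_eq_mul, mul_one_div]
    rfl
  simp_rw [hcent, sq (Finset.sum _ _), Finset.sum_mul_sum]
  rw [Finset.sum_comm]
  have hrow {e : Sym2 V} (he : e ∈ G.edgeFinset) :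
      ∑ ω : V → Fin n, ∑ f ∈ G.edgeFinset,
        (collisionIndicator e ω - 1 / n) * (collisionIndicator f ω - 1 / n) =
      (n : ℝ) ^ Fintype.card V * (((n : ℝ) - 1) / n ^ 2) := by
    rw [Finset.sum_comm, Finset.sum_eq_single_of_mem e he, sum_centered_sq hn (hdiag he)]
    intro f _ hfe
    exact sum_centered_mul_centered_eq_zero hn (hdiag he) hfe.symm
  rw [Finset.sum_congr rfl fun e he => hrow he, Finset.sum_const, nsmul_eq_mul, edgeCount]
  ring

/-- Chebyshev's inequality for the upper tail of the collision count under the uniform law. -/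
lemma sq_mul_pr_uniform_le {V : Type*} [Fintype V] [DecidableEq V] {n : ℕ} (hn : n ≠ 0)
    (G : SimpleGraph V) [DecidableRel G.Adj] {t : ℝ} (ht : 0 ≤ t) :
    t ^ 2 * pr (fun _ : Fin n => (1 : ℝ) / n)
        (fun ω : V → Fin n => edgeCount G / n + t ≤ collisions G ω) ≤
      edgeCount G * (((n : ℝ) - 1) / n ^ 2) := by
  have hn' : (0 : ℝ) < n := by exact_mod_cast Nat.pos_of_ne_zero hn
  have hN : (0 : ℝ) < (n : ℝ) ^ Fintype.card V := by positivity
  have hprod : ∏ _v : V, (1 : ℝ) / n = ((n : ℝ) ^ Fintype.card V)⁻¹ := by simp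
  refine le_of_mul_le_mul_left ?_ hN
  rw [← sum_collisions_sub_sq hn G, pr, Finset.mul_sum, Finset.mul_sum]
  refine Finset.sum_le_sum fun ω _ => ?_
  rw [hprod]
  split_ifs with h
  · rw [mul_comm (t ^ 2), mul_inv_cancel_left₀ hN.ne']
    exact pow_le_pow_left₀ ht (by linarith) 2
  · simpa using sq_nonneg _

/-- On the uniform distribution: if `|E| ≥ 4(n−1)/(τ²ε⁴)` then the probability that the
collision count is at least the threshold `T = |E|·(1+τε²)/n` is at most `1/4`. -/
theorem uniform_case {V : Type*} [Fintype V] [DecidableEq V] (n : ℕ) (hn : 2 ≤ n)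
    (ε τ : ℝ) (hε0 : 0 < ε) (hε1 : ε ≤ 1) (hτ0 : 0 < τ) (hτ1 : τ ≤ 1)
    (G : SimpleGraph V) [DecidableRel G.Adj]
    (hE : 4 * ((n : ℝ) - 1) / (τ ^ 2 * ε ^ 4) ≤ (edgeCount G : ℝ))
    (T : ℝ) (hT : T = (edgeCount G : ℝ) * (1 + τ * ε ^ 2) / n) :
    pr (fun _ : Fin n => (1 : ℝ) / n)
      (fun ω : V → Fin n => T ≤ collisions G ω) ≤ 1 / 4 := by
  have hn' : (2 : ℝ) ≤ n := by exact_mod_cast hn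
  have hδ : 0 < τ ^ 2 * ε ^ 4 := by positivity
  rw [div_le_iff₀ hδ] at hE
  have hm : 0 < (edgeCount G : ℝ) := by
    by_contra! h
    nlinarith
  have hTeq : T = edgeCount G / n + edgeCount G * (τ * ε ^ 2) / n := by
    rw [hT]; ring
  rw [hTeq]
  have hcheb := sq_mul_pr_uniform_le (by lia) G
    (t := edgeCount G * (τ * ε ^ 2) / n) (n := n) (by positivity)
  set p := pr (fun _ : Fin n => (1 : ℝ) / n)
    (fun ω : V → Fin n => edgeCount G / n + edgeCount G * (τ * ε ^ 2) / n ≤ collisions G ω)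
  have hp : edgeCount G * (τ ^ 2 * ε ^ 4) * p ≤ (n : ℝ) - 1 := by
    have hc : (0 : ℝ) < edgeCount G / n ^ 2 := by positivity
    refine le_of_mul_le_mul_left ?_ hc
    calc _ = (edgeCount G * (τ * ε ^ 2) / n) ^ 2 * p := by ring
      _ ≤ edgeCount G * (((n : ℝ) - 1) / n ^ 2) := hcheb
      _ = _ := by ring
  by_contra! h
  nlinarith
end

section
/- (Structural theorem.) Let n ≥ 2, ε ∈ (0,1], τ ∈ (0,1), and let G = (V,E) be a finite simple graph satisfying: (1) |E| ≥ 4n/(τ²ε⁴); (2) |E| ≥ 16n/((1−τ)²ε⁴); and (3) c(G)/|E|² ≤ (1−τ)²ε²/(16·√n). Then the collision-based tester (G,τ) is an (n,ε)-uniformity tester: for the uniform vector P, Pr[Z < T] ≥ 3/4, and for every probability vector P on [n] with ∑_i |P i − 1/n| ≥ ε, Pr[Z ≥ T] ≥ 3/4, where T = |E|·(1+τε²)/n. -/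
open Finset

/-- The collision-based tester `(G, τ)` is an `(n, ε)`-uniformity tester: with threshold
`T = |E|·(1+τε²)/n`, on the uniform vector the collision count satisfies `Z < T` with
probability at least `3/4`, and on every probability vector that is ε-far from uniform
(in ℓ₁) the collision count satisfies `Z ≥ T` with probability at least `3/4`. -/
def IsUniformityTester {V : Type*} [Fintype V] [DecidableEq V]
    (n : ℕ) (ε τ : ℝ) (G : SimpleGraph V) [DecidableRel G.Adj] : Prop :=
  (3 / 4 ≤ pr (fun _ : Fin n => (1 : ℝ) / n)
      (fun ω : V → Fin n =>
        collisions G ω < (edgeCount G : ℝ) * (1 + τ * ε ^ 2) / n)) ∧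
  (∀ P : Fin n → ℝ, (∀ i, 0 ≤ P i) → (∑ i, P i) = 1 →
    ε ≤ (∑ i, |P i - 1 / (n : ℝ)|) →
    3 / 4 ≤ pr P (fun ω : V → Fin n =>
      (edgeCount G : ℝ) * (1 + τ * ε ^ 2) / n ≤ collisions G ω))

section Expectation

variable {V : Type*} [Fintype V] [DecidableEq V] {n : ℕ} {P : Fin n → ℝ}

lemma sum_prod_eq_one (hP : ∑ i, P i = 1) : ∑ ω : V → Fin n, ∏ v, P (ω v) = 1 := by
  have h := Finset.prod_univ_sum (fun _ : V => (Finset.univ : Finset (Fin n))) (fun _ i => P i)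
  rw [Fintype.piFinset_univ] at h
  rw [← h]
  simp [hP]

/-- Resampling the coordinate `v` does not change the expectation. -/
lemma ex_eq_ex_update (hP : ∑ i, P i = 1) (v : V) (f : (V → Fin n) → ℝ) :
    ex P f = ex P (fun ω => ∑ i, P i * f (Function.update ω v i)) := by
  have hinv : Function.Involutive
      (fun x : (V → Fin n) × Fin n => (Function.update x.1 v x.2, x.1 v)) := by
    rintro ⟨ω, i⟩
    simp
  have hleft : ex P f
      = ∑ x : (V → Fin n) × Fin n, ((∏ u, P (x.1 u)) * P x.2) * f x.1 := by
    rw [Fintype.sum_prod_type]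
    refine Finset.sum_congr rfl fun ω _ => ?_
    simp only [← Finset.sum_mul, ← Finset.mul_sum, hP, mul_one]
  have hright : ex P (fun ω => ∑ i, P i * f (Function.update ω v i))
      = ∑ x : (V → Fin n) × Fin n,
          ((∏ u, P (x.1 u)) * P x.2) * f (Function.update x.1 v x.2) := by
    rw [Fintype.sum_prod_type]
    refine Finset.sum_congr rfl fun ω _ => ?_
    rw [Finset.mul_sum]
    exact Finset.sum_congr rfl fun i _ => by ring
  rw [hleft, hright, ← Equiv.sum_comp hinv.toPerm]
  refine Finset.sum_congr rfl ?_
  rintro ⟨ω, i⟩ -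
  congr 1
  simp only [Function.Involutive.coe_toPerm]
  rw [← Finset.mul_prod_erase _ _ (Finset.mem_univ v),
    ← Finset.mul_prod_erase _ (fun u => P (ω u)) (Finset.mem_univ v),
    Finset.prod_congr rfl (g := fun u => P (ω u))]
  · simp only [Function.update_self]
    ring
  · intro u hu
    rw [Function.update_of_ne (Finset.ne_of_mem_erase hu)]

lemma ex_apply (hP : ∑ i, P i = 1) (v : V) (g : Fin n → ℝ) :
    ex P (fun ω : V → Fin n => g (ω v)) = ∑ i, P i * g i := by
  rw [ex_eq_ex_update hP v]
  simp only [Function.update_self, ex]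
  rw [← Finset.sum_mul, sum_prod_eq_one hP, one_mul]

/-- Chebyshev's inequality around an arbitrary centre `μ`. -/
lemma three_quarters_le_pr (hP0 : ∀ i, 0 ≤ P i) (hP : ∑ i, P i = 1)
    {A : (V → Fin n) → Prop} {f : (V → Fin n) → ℝ} {μ a : ℝ} (ha : 0 < a)
    (hA : ∀ ω, ¬ A ω → a ≤ |f ω - μ|)
    (hvar : ex P (fun ω => (f ω - μ) ^ 2) ≤ a ^ 2 / 4) :
    3 / 4 ≤ pr P A := by
  classical
  have ha2 : 0 < a ^ 2 := by positivity
  have key : (∑ ω : V → Fin n, ∏ v, P (ω v)) * a ^ 2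
      ≤ pr P A * a ^ 2 + ex P (fun ω => (f ω - μ) ^ 2) := by
    unfold pr ex
    rw [Finset.sum_mul, Finset.sum_mul, ← Finset.sum_add_distrib]
    refine Finset.sum_le_sum fun ω _ => ?_
    have hw : 0 ≤ ∏ v, P (ω v) := Finset.prod_nonneg fun v _ => hP0 _
    by_cases h : A ω
    · rw [if_pos h]
      have := mul_nonneg hw (sq_nonneg (f ω - μ))
      linarith
    · rw [if_neg h, zero_mul, zero_add]
      refine mul_le_mul_of_nonneg_left ?_ hw
      simpa only [sq_abs] using pow_le_pow_left₀ ha.le (hA ω h) 2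
  rw [sum_prod_eq_one hP] at key
  by_contra! hlt
  nlinarith

end Expectation

section Variance

/-- The indicator that the two endpoints of `e` receive the same sample. -/
noncomputable def collides {V : Type*} {n : ℕ} (ω : V → Fin n) (e : Sym2 V) : ℝ :=
  Sym2.lift ⟨fun u v => if ω u = ω v then (1 : ℝ) else 0,
    fun u v => by by_cases h : ω u = ω v <;> simp [h, eq_comm]⟩ e

lemma collides_mk {V : Type*} {n : ℕ} (ω : V → Fin n) (u v : V) :
    collides ω s(u, v) = if ω u = ω v then (1 : ℝ) else 0 := rfl

variable {V : Type*} [Fintype V] [DecidableEq V] {n : ℕ} {P : Fin n → ℝ}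

lemma sum_mul_ite_sub (hP : ∑ i, P i = 1) (j : Fin n) (t : ℝ) :
    ∑ i, P i * ((if j = i then (1 : ℝ) else 0) - t) = P j - t := by
  simp [mul_sub, Finset.sum_sub_distrib, ← Finset.sum_mul, hP]

lemma sum_mul_ite_sub_sq (hP : ∑ i, P i = 1) (j : Fin n) (t : ℝ) :
    ∑ i, P i * ((if j = i then (1 : ℝ) else 0) - t) ^ 2 = P j * (1 - 2 * t) + t ^ 2 := by
  have h : ∀ i, P i * ((if j = i then (1 : ℝ) else 0) - t) ^ 2
      = (if j = i then P i * (1 - 2 * t) else 0) + P i * t ^ 2 := by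
    intro i
    split_ifs <;> ring
  simp [h, Finset.sum_add_distrib, ← Finset.sum_mul, hP]

lemma ex_collides_disjoint (hP : ∑ i, P i = 1) {a b c d : V} (hab : a ≠ b)
    (hac : a ≠ c) (had : a ≠ d) (hbc : b ≠ c) (hbd : b ≠ d) :
    ex P (fun ω : V → Fin n => (collides ω s(a, b) - ∑ i, P i ^ 2) *
      (collides ω s(c, d) - ∑ i, P i ^ 2)) = 0 := by
  simp only [collides_mk]
  rw [ex_eq_ex_update hP b]
  simp only [Function.update_self, Function.update_of_ne hab, Function.update_of_ne hbc.symm,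
    Function.update_of_ne hbd.symm, ← mul_assoc, ← Finset.sum_mul, sum_mul_ite_sub hP]
  rw [ex_eq_ex_update hP a]
  simp only [Function.update_self, Function.update_of_ne hac.symm,
    Function.update_of_ne had.symm, ← mul_assoc, ← Finset.sum_mul]
  have h : ∑ i, P i * (P i - ∑ j, P j ^ 2) = 0 := by
    simp only [mul_sub, Finset.sum_sub_distrib, ← Finset.sum_mul, hP, one_mul, ← sq, sub_self]
  simp [h, ex]

lemma ex_collides_adjacent (hP : ∑ i, P i = 1) {a b c : V} (hab : a ≠ b)
    (hac : a ≠ c) (hbc : b ≠ c) :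
    ex P (fun ω : V → Fin n => (collides ω s(a, b) - ∑ i, P i ^ 2) *
      (collides ω s(a, c) - ∑ i, P i ^ 2)) = ∑ i, P i ^ 3 - (∑ i, P i ^ 2) ^ 2 := by
  simp only [collides_mk]
  rw [ex_eq_ex_update hP b]
  simp only [Function.update_self, Function.update_of_ne hab, Function.update_of_ne hbc.symm,
    ← mul_assoc, ← Finset.sum_mul, sum_mul_ite_sub hP]
  rw [ex_eq_ex_update hP c]
  simp only [Function.update_self, Function.update_of_ne hac, mul_left_comm (P _) (P _ - _),
    ← Finset.mul_sum, sum_mul_ite_sub hP]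
  rw [ex_apply hP a (fun j => (P j - ∑ i, P i ^ 2) * (P j - ∑ i, P i ^ 2))]
  have h : ∀ j, P j * ((P j - ∑ i, P i ^ 2) * (P j - ∑ i, P i ^ 2))
      = P j ^ 3 - P j ^ 2 * (2 * ∑ i, P i ^ 2) + P j * (∑ i, P i ^ 2) ^ 2 := fun j => by ring
  simp only [h, Finset.sum_add_distrib, Finset.sum_sub_distrib, ← Finset.sum_mul, hP]
  ring

lemma ex_collides_self (hP : ∑ i, P i = 1) {a b : V} (hab : a ≠ b) :
    ex P (fun ω : V → Fin n => (collides ω s(a, b) - ∑ i, P i ^ 2) *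
      (collides ω s(a, b) - ∑ i, P i ^ 2)) = ∑ i, P i ^ 2 - (∑ i, P i ^ 2) ^ 2 := by
  simp only [collides_mk, ← sq]
  rw [ex_eq_ex_update hP b]
  simp only [Function.update_self, Function.update_of_ne hab, sum_mul_ite_sub_sq hP]
  rw [ex_apply hP a (fun j => P j * (1 - 2 * ∑ i, P i ^ 2) + (∑ i, P i ^ 2) ^ 2)]
  have h : ∀ j, P j * (P j * (1 - 2 * ∑ i, P i ^ 2) + (∑ i, P i ^ 2) ^ 2)
      = P j ^ 2 * (1 - 2 * ∑ i, P i ^ 2) + P j * (∑ i, P i ^ 2) ^ 2 := fun j => by ring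
  simp only [h, Finset.sum_add_distrib, ← Finset.sum_mul, hP]
  ring

/-- The covariance of two edge indicators in terms of the number of shared endpoints. -/
lemma ex_collides_mul (hP : ∑ i, P i = 1) {e f : Sym2 V} (he : ¬ e.IsDiag) (hf : ¬ f.IsDiag) :
    ex P (fun ω : V → Fin n => (collides ω e - ∑ i, P i ^ 2) *
      (collides ω f - ∑ i, P i ^ 2))
    = (∑ v, (if v ∈ e then (1 : ℝ) else 0) * (if v ∈ f then (1 : ℝ) else 0)) *
        (∑ i, P i ^ 3 - (∑ i, P i ^ 2) ^ 2)
      + (if e = f then (∑ i, P i ^ 2 - (∑ i, P i ^ 2) ^ 2)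
          - 2 * (∑ i, P i ^ 3 - (∑ i, P i ^ 2) ^ 2) else 0) := by
  induction e with | _ a b
  induction f with | _ c d
  rw [Sym2.mk_isDiag_iff] at he hf
  have hshared : ∑ v, (if v ∈ s(a, b) then (1 : ℝ) else 0) * (if v ∈ s(c, d) then (1 : ℝ) else 0)
      = (if a ∈ s(c, d) then (1 : ℝ) else 0) + (if b ∈ s(c, d) then (1 : ℝ) else 0) := by
    have h : ∀ v, (if v ∈ s(a, b) then (1 : ℝ) else 0) * (if v ∈ s(c, d) then (1 : ℝ) else 0)
        = (if v = a then (if v ∈ s(c, d) then (1 : ℝ) else 0) else 0)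
          + (if v = b then (if v ∈ s(c, d) then (1 : ℝ) else 0) else 0) := by
      intro v
      by_cases h1 : v = a
      · subst h1
        simp [he]
      · by_cases h2 : v = b <;> simp [h1, h2, Ne.symm he]
    simp only [h, Finset.sum_add_distrib, Finset.sum_ite_eq', Finset.mem_univ, if_true]
  rw [hshared]
  by_cases hac : a = c
  · subst hac
    by_cases hbd : b = d
    · subst hbd
      rw [ex_collides_self hP he]
      simp
      ring
    · rw [ex_collides_adjacent hP he hf hbd]
      simp [hbd, Ne.symm he]
  by_cases had : a = d
  · subst had
    rw [Sym2.eq_swap (a := c)]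
    by_cases hbc : b = c
    · subst hbc
      rw [ex_collides_self hP he]
      simp
      ring
    · rw [ex_collides_adjacent hP he hac hbc]
      simp [hbc, Ne.symm he]
  by_cases hbc : b = c
  · subst hbc
    rw [Sym2.eq_swap (a := a), ex_collides_adjacent hP (Ne.symm he) hf had]
    simp [hac, had]
  by_cases hbd : b = d
  · subst hbd
    rw [Sym2.eq_swap (a := a), Sym2.eq_swap (a := c),
      ex_collides_adjacent hP (Ne.symm he) (Ne.symm hf) hac]
    simp [hac, he]
  rw [ex_collides_disjoint hP he hac had hbc hbd]
  simp [hac, had, hbc, hbd]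

lemma sum_shared_endpoints (G : SimpleGraph V) [DecidableRel G.Adj] :
    ∑ e ∈ G.edgeFinset, ∑ f ∈ G.edgeFinset,
      ∑ v, (if v ∈ e then (1 : ℝ) else 0) * (if v ∈ f then (1 : ℝ) else 0)
    = twoPaths G + 2 * edgeCount G := by
  have hdeg : ∀ v, ∑ e ∈ G.edgeFinset, (if v ∈ e then (1 : ℝ) else 0) = G.degree v := by
    intro v
    rw [Finset.sum_boole, ← G.incidenceFinset_eq_filter, G.card_incidenceFinset_eq_degree]
  have hswap : ∑ e ∈ G.edgeFinset, ∑ f ∈ G.edgeFinset,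
      ∑ v, (if v ∈ e then (1 : ℝ) else 0) * (if v ∈ f then (1 : ℝ) else 0)
      = ∑ v, (G.degree v : ℝ) * G.degree v := by
    simp_rw [← hdeg, Finset.sum_mul_sum]
    simp_rw [Finset.sum_comm (s := (Finset.univ : Finset V))]
  rw [hswap, edgeCount]
  have hhand : (2 : ℝ) * G.edgeFinset.card = ∑ v, (G.degree v : ℝ) := by
    exact_mod_cast G.sum_degrees_eq_twice_card_edges.symm
  rw [hhand, twoPaths]
  push_cast
  rw [← Finset.sum_add_distrib]
  refine Finset.sum_congr rfl fun v _ => ?_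
  cases G.degree v with
  | zero => simp
  | succ k =>
    push_cast [Nat.add_sub_cancel]
    ring

/-- The second moment of the collision count around its mean `|E|·∑ Pᵢ²`. -/
lemma ex_collisions_sub_sq (hP : ∑ i, P i = 1) (G : SimpleGraph V) [DecidableRel G.Adj] :
    ex P (fun ω : V → Fin n => (collisions G ω - edgeCount G * ∑ i, P i ^ 2) ^ 2)
    = edgeCount G * (∑ i, P i ^ 2 - (∑ i, P i ^ 2) ^ 2)
      + twoPaths G * (∑ i, P i ^ 3 - (∑ i, P i ^ 2) ^ 2) := by
  have hexpand : ∀ ω : V → Fin n, (collisions G ω - edgeCount G * ∑ i, P i ^ 2) ^ 2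
      = ∑ e ∈ G.edgeFinset, ∑ f ∈ G.edgeFinset,
        (collides ω e - ∑ i, P i ^ 2) * (collides ω f - ∑ i, P i ^ 2) := by
    intro ω
    have h : collisions G ω - edgeCount G * ∑ i, P i ^ 2
        = ∑ e ∈ G.edgeFinset, (collides ω e - ∑ i, P i ^ 2) := by
      rw [Finset.sum_sub_distrib, Finset.sum_const, nsmul_eq_mul]
      rfl
    rw [h, sq, Finset.sum_mul_sum]
  have hdiag : ∀ e ∈ G.edgeFinset, ¬ e.IsDiag := fun e he =>
    G.not_isDiag_of_mem_edgeSet (SimpleGraph.mem_edgeFinset.mp he)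
  simp only [hexpand, ex_sum]
  rw [Finset.sum_congr rfl fun e he => Finset.sum_congr rfl fun f hf =>
    ex_collides_mul hP (hdiag e he) (hdiag f hf)]
  simp only [Finset.sum_add_distrib, ← Finset.sum_mul, sum_shared_endpoints]
  rw [Finset.sum_congr rfl fun e he =>
    (Finset.sum_ite_eq G.edgeFinset e _).trans (if_pos he), Finset.sum_const, nsmul_eq_mul,
    ← edgeCount]
  ring

end Variance

section Moments

variable {n : ℕ} {P : Fin n → ℝ}

lemma sum_sq_eq (hn : (n : ℝ) ≠ 0) (hP : ∑ i, P i = 1) :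
    ∑ i, P i ^ 2 = 1 / n + ∑ i, (P i - 1 / n) ^ 2 := by
  have h : ∀ i, (P i - 1 / n) ^ 2 = P i ^ 2 - P i * (2 / n) + 1 / (n : ℝ) ^ 2 :=
    fun i => by ring
  simp only [h, Finset.sum_add_distrib, Finset.sum_sub_distrib, ← Finset.sum_mul, hP,
    Finset.sum_const, Finset.card_univ, Fintype.card_fin, nsmul_eq_mul]
  field_simp
  ring

lemma sum_cube_eq (hn : (n : ℝ) ≠ 0) (hP : ∑ i, P i = 1) :
    ∑ i, P i ^ 3 = 1 / (n : ℝ) ^ 2 + 3 / n * ∑ i, (P i - 1 / n) ^ 2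
      + ∑ i, (P i - 1 / n) ^ 3 := by
  have h : ∀ i, (P i - 1 / n) ^ 3
      = P i ^ 3 - P i ^ 2 * (3 / n) + P i * (3 / (n : ℝ) ^ 2) - 1 / (n : ℝ) ^ 3 :=
    fun i => by ring
  have h2 := sum_sq_eq hn hP
  simp only [h, Finset.sum_add_distrib, Finset.sum_sub_distrib, ← Finset.sum_mul, hP,
    Finset.sum_const, Finset.card_univ, Fintype.card_fin, nsmul_eq_mul]
  rw [h2]
  field_simp
  ring

lemma sum_cube_le {ι : Type*} (s : Finset ι) (q : ι → ℝ) :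
    ∑ i ∈ s, q i ^ 3 ≤ √(∑ i ∈ s, q i ^ 2) ^ 3 := by
  have hS : 0 ≤ ∑ i ∈ s, q i ^ 2 := Finset.sum_nonneg fun i _ => sq_nonneg _
  calc ∑ i ∈ s, q i ^ 3 ≤ ∑ i ∈ s, q i ^ 2 * √(∑ i ∈ s, q i ^ 2) := by
        refine Finset.sum_le_sum fun i hi => ?_
        rw [pow_succ]
        refine mul_le_mul_of_nonneg_left ?_ (sq_nonneg _)
        refine Real.le_sqrt_of_sq_le ?_
        exact Finset.single_le_sum (f := fun i => q i ^ 2) (fun j _ => sq_nonneg _) hi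
    _ = √(∑ i ∈ s, q i ^ 2) ^ 3 := by
        rw [← Finset.sum_mul, pow_succ _ 2, Real.sq_sqrt hS]

lemma sq_le_mul_sum_sq {ε : ℝ} (hε : 0 ≤ ε) (hfar : ε ≤ ∑ i, |P i - 1 / (n : ℝ)|) :
    ε ^ 2 ≤ n * ∑ i, (P i - 1 / (n : ℝ)) ^ 2 := by
  have h := sq_sum_le_card_mul_sum_sq (s := (Finset.univ : Finset (Fin n)))
    (f := fun i => |P i - 1 / (n : ℝ)|)
  simp only [sq_abs, Finset.card_univ, Fintype.card_fin] at h
  exact (pow_le_pow_left₀ hε hfar 2).trans h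

end Moments

/-- The second-moment bound in the far case, where `r = √n` and `s` is the `ℓ₂` distance
to uniform. -/
lemma far_second_moment_le {m c k ε r s : ℝ} (hm : 0 ≤ m) (hk : 0 ≤ k)
    (hε0 : 0 < ε) (hε1 : ε ≤ 1) (hr : 1 ≤ r) (hs : 0 ≤ s) (hrs : ε ≤ r * s)
    (h2 : 16 * r ^ 2 ≤ m * (k * ε ^ 4)) (h3 : c * (16 * r) ≤ k * ε ^ 2 * m ^ 2) :
    m * (1 / r ^ 2 + s ^ 2) + c * (s ^ 3 + s ^ 2 / r ^ 2) ≤ m ^ 2 * k * s ^ 4 / 4 := by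
  have hr0 : 0 < r := by linarith
  have hmk : 0 ≤ m * k := mul_nonneg hm hk
  have hε2 : ε ^ 2 ≤ r ^ 2 * s ^ 2 := by
    rw [← mul_pow]
    exact pow_le_pow_left₀ hε0.le hrs 2
  have hε4 : ε ^ 4 ≤ r ^ 4 * s ^ 4 := by
    rw [← mul_pow]
    exact pow_le_pow_left₀ hε0.le hrs 4
  have hε42 : ε ^ 4 ≤ ε ^ 2 := pow_le_pow_of_le_one hε0.le hε1 (by norm_num)
  have hε21 : ε ^ 2 ≤ ε := by nlinarith
  have hinv_le : m * (1 / r ^ 2) ≤ m ^ 2 * k * s ^ 4 / 16 := by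
    have h : 16 * r ^ 2 ≤ r ^ 2 * (m * k * (r ^ 2 * s ^ 4)) := by
      calc 16 * r ^ 2 ≤ m * k * ε ^ 4 := by linarith
        _ ≤ m * k * (r ^ 4 * s ^ 4) := by gcongr
        _ = _ := by ring
    have h' : 16 ≤ m * k * (r ^ 2 * s ^ 4) := by
      refine le_of_mul_le_mul_left ?_ (pow_pos hr0 2)
      linarith
    rw [mul_one_div, div_le_iff₀ (pow_pos hr0 2)]
    nlinarith
  have hsq_le : m * s ^ 2 ≤ m ^ 2 * k * s ^ 4 / 16 := by
    have h : 16 * r ^ 2 ≤ r ^ 2 * (m * k * s ^ 2) := by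
      calc 16 * r ^ 2 ≤ m * k * ε ^ 4 := by linarith
        _ ≤ m * k * (r ^ 2 * s ^ 2) := by gcongr; exact hε42.trans hε2
        _ = _ := by ring
    have h' : 16 ≤ m * k * s ^ 2 := by
      refine le_of_mul_le_mul_left ?_ (pow_pos hr0 2)
      linarith
    have := mul_le_mul_of_nonneg_left h' (mul_nonneg hm (sq_nonneg s))
    linarith
  have hcube_le : c * s ^ 3 ≤ m ^ 2 * k * s ^ 4 / 16 := by
    refine le_of_mul_le_mul_right ?_ (show 0 < 16 * r by positivity)
    calc c * s ^ 3 * (16 * r) = s ^ 3 * (c * (16 * r)) := by ring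
      _ ≤ s ^ 3 * (k * ε ^ 2 * m ^ 2) := by gcongr
      _ ≤ s ^ 3 * (k * (r * s) * m ^ 2) := by gcongr; exact hε21.trans hrs
      _ = _ := by ring
  have hsq_div_le : c * (s ^ 2 / r ^ 2) ≤ m ^ 2 * k * s ^ 4 / 16 := by
    refine le_of_mul_le_mul_right ?_ (show 0 < 16 * r * r ^ 2 by positivity)
    calc c * (s ^ 2 / r ^ 2) * (16 * r * r ^ 2) = s ^ 2 * (c * (16 * r)) := by field_simp
      _ ≤ s ^ 2 * (k * ε ^ 2 * m ^ 2) := by gcongr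
      _ ≤ s ^ 2 * (k * (r ^ 2 * s ^ 2) * m ^ 2) := by gcongr
      _ = 1 * (s ^ 4 * k * r ^ 2 * m ^ 2) := by ring
      _ ≤ r * (s ^ 4 * k * r ^ 2 * m ^ 2) := by gcongr
      _ = _ := by ring
  linarith

/-- Structural theorem: if `|E| ≥ 4n/(τ²ε⁴)`, `|E| ≥ 16n/((1−τ)²ε⁴)` and
`c(G)/|E|² ≤ (1−τ)²ε²/(16√n)`, then `(G, τ)` is an `(n, ε)`-uniformity tester. -/
theorem structural_theorem {V : Type*} [Fintype V] [DecidableEq V] (n : ℕ) (hn : 2 ≤ n)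
    (ε τ : ℝ) (hε0 : 0 < ε) (hε1 : ε ≤ 1) (hτ0 : 0 < τ) (hτ1 : τ < 1)
    (G : SimpleGraph V) [DecidableRel G.Adj]
    (h1 : 4 * (n : ℝ) / (τ ^ 2 * ε ^ 4) ≤ (edgeCount G : ℝ))
    (h2 : 16 * (n : ℝ) / ((1 - τ) ^ 2 * ε ^ 4) ≤ (edgeCount G : ℝ))
    (h3 : (twoPaths G : ℝ) / (edgeCount G : ℝ) ^ 2
        ≤ (1 - τ) ^ 2 * ε ^ 2 / (16 * Real.sqrt n)) :
    IsUniformityTester n ε τ G := by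
  have hn1 : (1 : ℝ) ≤ n := by exact_mod_cast (by omega : 1 ≤ n)
  have hn0 : (0 : ℝ) < n := by linarith
  have hk : 0 < (1 - τ) ^ 2 := pow_pos (by linarith) 2
  have hm : (0 : ℝ) < edgeCount G := lt_of_lt_of_le (by positivity) h1
  rw [div_le_iff₀ (by positivity)] at h1 h2
  rw [div_le_div_iff₀ (by positivity) (by positivity)] at h3
  constructor
  · have hP : ∑ _i : Fin n, (1 : ℝ) / n = 1 := by
      simp [hn0.ne']
    have hP2 : ∑ _i : Fin n, ((1 : ℝ) / n) ^ 2 = 1 / n := by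
      simp only [Finset.sum_const, Finset.card_univ, Fintype.card_fin, nsmul_eq_mul]
      field_simp
    have hP3 : ∑ _i : Fin n, ((1 : ℝ) / n) ^ 3 = (1 / n) ^ 2 := by
      simp only [Finset.sum_const, Finset.card_univ, Fintype.card_fin, nsmul_eq_mul]
      field_simp
    have hvar := ex_collisions_sub_sq hP G
    rw [hP2, hP3, sub_self, mul_zero, add_zero] at hvar
    refine three_quarters_le_pr (fun _ => by positivity) hP
      (a := edgeCount G * (τ * ε ^ 2) / n) (by positivity) (fun ω hω => ?_) (hvar.trans_le ?_)
    · rw [not_lt] at hω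
      refine le_trans ?_ (le_abs_self _)
      have : (edgeCount G : ℝ) * (1 + τ * ε ^ 2) / n
          = edgeCount G * (1 / n) + edgeCount G * (τ * ε ^ 2) / n := by ring
      linarith
    · calc (edgeCount G : ℝ) * (1 / n - (1 / n) ^ 2) ≤ edgeCount G * (1 / n) := by
            gcongr
            linarith [sq_nonneg ((1 : ℝ) / n)]
        _ = edgeCount G * (4 * n) / (4 * n ^ 2) := by field_simp
        _ ≤ edgeCount G * (edgeCount G * (τ ^ 2 * ε ^ 4)) / (4 * n ^ 2) := by gcongr
        _ = _ := by field_simp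
  · intro P hP0 hP hfar
    have hS2 := sq_le_mul_sum_sq hε0.le hfar
    have hcube := sum_cube_le Finset.univ (fun i => P i - 1 / (n : ℝ))
    have hvar := ex_collisions_sub_sq hP G
    rw [sum_cube_eq hn0.ne' hP, sum_sq_eq hn0.ne' hP] at hvar
    have hS0 : 0 ≤ ∑ i, (P i - 1 / (n : ℝ)) ^ 2 := Finset.sum_nonneg fun i _ => sq_nonneg _
    generalize ∑ i, (P i - 1 / (n : ℝ)) ^ 2 = S at *
    generalize ∑ i, (P i - 1 / (n : ℝ)) ^ 3 = C at *
    have hSpos : 0 < S := pos_of_mul_pos_right (lt_of_lt_of_le (pow_pos hε0 2) hS2) hn0.le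
    have hgap : edgeCount G * ((1 - τ) * S) ≤ edgeCount G * (S - τ * ε ^ 2 / n) := by
      have : τ * ε ^ 2 / n ≤ τ * S := by
        rw [div_le_iff₀ hn0]
        nlinarith
      gcongr
      linarith
    refine three_quarters_le_pr hP0 hP (a := edgeCount G * ((1 - τ) * S))
      (mul_pos hm (mul_pos (by linarith) hSpos)) (fun ω hω => ?_) (hvar.trans_le ?_)
    · rw [not_le] at hω
      refine le_trans ?_ (neg_le_abs _)
      have : (edgeCount G : ℝ) * (1 + τ * ε ^ 2) / n
          = edgeCount G * (1 / n + S) - edgeCount G * (S - τ * ε ^ 2 / n) := by ring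
      linarith
    · have hr : 1 ≤ √(n : ℝ) := Real.one_le_sqrt.mpr hn1
      have hrs : ε ≤ √(n : ℝ) * √S := by
        rw [← Real.sqrt_mul hn0.le]
        exact Real.le_sqrt_of_sq_le hS2
      have hbound := far_second_moment_le (r := √(n : ℝ)) (s := √S) hm.le hk.le hε0 hε1 hr
        (Real.sqrt_nonneg S) hrs (by rw [Real.sq_sqrt hn0.le]; exact h2) h3
      have hs4 : √S ^ 4 = S ^ 2 := by
        rw [show √S ^ 4 = (√S ^ 2) ^ 2 by ring, Real.sq_sqrt hS0]
      rw [Real.sq_sqrt hn0.le, Real.sq_sqrt hS0, hs4] at hbound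
      calc (edgeCount G : ℝ) * (1 / n + S - (1 / n + S) ^ 2)
            + twoPaths G * (1 / (n : ℝ) ^ 2 + 3 / n * S + C - (1 / n + S) ^ 2)
          ≤ edgeCount G * (1 / n + S) + twoPaths G * (√S ^ 3 + S / n) := by
            gcongr
            · linarith [sq_nonneg ((1 : ℝ) / n + S)]
            · have : 1 / (n : ℝ) ^ 2 + 3 / n * S + C - (1 / n + S) ^ 2 = C + S / n - S ^ 2 := by
                ring
              linarith [sq_nonneg S]
        _ ≤ edgeCount G ^ 2 * (1 - τ) ^ 2 * S ^ 2 / 4 := hbound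
        _ = _ := by ring
end
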